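/- arXiv:1605.07061 — 2 statements merged into one kernel-verified Lean document; each statement's English description precedes it below -/
import Mathlib

section
/- Let P ⊆ ℝ² be a convex polygon with rational vertices and let S ⊆ P be the convex hull of finitely many rational points. Let k be the minimum cardinality of a finite set of points of ℝ² whose convex hull Q satisfies S ⊆ Q ⊆ P. Then there exist k rational points q_1, …, q_k ∈ ℚ² with S ⊆ conv{q_1, …, q_k} ⊆ P. -/
open Set

def dt (u v w : Fin 2 → ℝ) : ℝ := (v 0 - u 0) * (w 1 - u 1) - (v 1 - u 1) * (w 0 - u 0)

lemma slope_lemma {ι : Type*} [Finite ι] [Nonempty ι] (q : ι → Fin 2 → ℝ) (x : Fin 2 → ℝ)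
    (hx : x ∉ convexHull ℝ (range q)) :
    ∃ m u : ι → ℝ, ∃ c : ℝ, 0 < c ∧ (∀ l, 0 < u l) ∧
      (∀ i l, dt x (q i) (q l) = c * (u i * u l * (m l - m i))) ∧
      (∀ i l, m i = m l → ∀ z, u i * (q l z - x z) = u l * (q i z - x z)) := by
  obtain ⟨f, b, hfx, hf⟩ := geometric_hahn_banach_point_closed (convex_convexHull ℝ (range q))
    ((Set.finite_range q).isClosed_convexHull ℝ) hx
  set f0 := f (Pi.single 0 1) with hf0
  set f1 := f (Pi.single 1 1) with hf1
  have hfe : ∀ y : Fin 2 → ℝ, f y = f0 * y 0 + f1 * y 1 := by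
    intro y
    have : y = y 0 • (Pi.single 0 1 : Fin 2 → ℝ) + y 1 • (Pi.single 1 1 : Fin 2 → ℝ) := by
      ext z; fin_cases z <;> simp
    conv_lhs => rw [this]
    rw [map_add, map_smul, map_smul]; simp [hf0, hf1, mul_comm]
  have hu : ∀ l, 0 < f0 * (q l 0 - x 0) + f1 * (q l 1 - x 1) := by
    intro l
    have h1 := hf (q l) (subset_convexHull ℝ _ (mem_range_self l))
    rw [hfe] at h1 hfx
    linarith
  have hn : 0 < f0 ^ 2 + f1 ^ 2 := by
    by_contra h
    have h0 : f0 = 0 := by nlinarith [sq_nonneg f0, sq_nonneg f1]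
    have h1 : f1 = 0 := by nlinarith [sq_nonneg f0, sq_nonneg f1]
    have := hu (Classical.arbitrary ι)
    simp [h0, h1] at this
  refine ⟨fun l => (f0 * (q l 1 - x 1) - f1 * (q l 0 - x 0)) /
      (f0 * (q l 0 - x 0) + f1 * (q l 1 - x 1)),
    fun l => f0 * (q l 0 - x 0) + f1 * (q l 1 - x 1), 1 / (f0 ^ 2 + f1 ^ 2), by positivity, hu, ?_, ?_⟩
  · intro i l
    have h1 := (hu i).ne'
    have h2 := (hu l).ne'
    simp only [dt]
    rw [div_sub_div _ _ h2 h1, mul_div_assoc', one_div, inv_mul_eq_div]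
    rw [eq_div_iff hn.ne', eq_div_iff (mul_ne_zero h2 h1)]
    ring
  · intro i l h z
    have h1 := (hu i).ne'
    have h2 := (hu l).ne'
    simp only at h
    rw [div_eq_div_iff h1 h2] at h
    have key : (f0 ^ 2 + f1 ^ 2) * ((f0 * (q i 0 - x 0) + f1 * (q i 1 - x 1)) * (q l z - x z)) =
      (f0 ^ 2 + f1 ^ 2) * ((f0 * (q l 0 - x 0) + f1 * (q l 1 - x 1)) * (q i z - x z)) := by
      fin_cases z
      · simp only [Fin.zero_eta]; linear_combination (f1) * h
      · simp only [Fin.mk_one]; linear_combination (-f0) * h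
    exact mul_left_cancel₀ hn.ne' key

lemma hull_of_dt {ι : Type*} [Finite ι] [Nonempty ι] (q : ι → Fin 2 → ℝ) (σ : ι → ι)
    (hσ : ∀ i, σ i ≠ i) (h3 : ∀ i, ∃ l, l ≠ i ∧ l ≠ σ i)
    (hpos : ∀ i l, l ≠ i → l ≠ σ i → 0 < dt (q i) (q (σ i)) (q l)) (x : Fin 2 → ℝ)
    (hx : ∀ i, 0 ≤ dt (q i) (q (σ i)) x) : x ∈ convexHull ℝ (range q) := by
  by_contra hxc
  obtain ⟨m, u, c, hc, hu, hd, hcol⟩ := slope_lemma q x hxc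
  obtain ⟨i, hi⟩ := Finite.exists_max m
  have hstep : ∀ i, (∀ l, m l ≤ m i) → m (σ i) = m i := by
    intro i hi
    have h1 := hx i
    have h2 : dt (q i) (q (σ i)) x = dt x (q i) (q (σ i)) := by simp only [dt]; ring
    rw [h2, hd] at h1
    have h4 := mul_pos hc (mul_pos (hu i) (hu (σ i)))
    refine le_antisymm (hi _) ?_
    by_contra h
    push Not at h
    have : c * (u i * u (σ i)) * (m (σ i) - m i) < 0 := mul_neg_of_pos_of_neg h4 (by linarith)
    linarith
  have e1 := hstep i hi
  have hj : ∀ l, m l ≤ m (σ i) := fun l => by rw [e1]; exact hi l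
  have e2 := hstep _ hj
  by_cases hl : σ (σ i) = i
  · obtain ⟨z, hz1, hz2⟩ := h3 i
    have a1 := hpos i z hz1 hz2
    have a2 := hpos (σ i) z hz2 (by rwa [hl])
    rw [hl] at a2
    simp only [dt] at a1 a2
    linarith
  · have a1 := hpos i (σ (σ i)) hl (hσ _)
    have i1 : dt x (q i) (q (σ i)) = 0 := by rw [hd, e1]; simp
    have i2 : dt x (q (σ i)) (q (σ (σ i))) = 0 := by rw [hd, e2]; simp
    have i3 : dt x (q i) (q (σ (σ i))) = 0 := by rw [hd, e2, e1]; simp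
    have : dt (q i) (q (σ i)) (q (σ (σ i))) = dt x (q i) (q (σ i)) + dt x (q (σ i)) (q (σ (σ i)))
      - dt x (q i) (q (σ (σ i))) := by simp only [dt]; ring
    linarith

lemma mem_hull_two {s : Set (Fin 2 → ℝ)} {x y z : Fin 2 → ℝ} (hx : x ∈ s) (hy : y ∈ s) {a b : ℝ}
    (ha : 0 < a) (hab : a ≤ b) (h : ∀ c, a * (y c - x c) = b * (z c - x c)) :
    z ∈ convexHull ℝ s := by
  have hb : 0 < b := by linarith
  have : z = (1 - a / b) • x + (a / b) • y := by
    ext c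
    have := h c
    simp only [Pi.add_apply, Pi.smul_apply, smul_eq_mul]
    field_simp
    linarith
  rw [this]
  exact convex_convexHull ℝ s (subset_convexHull ℝ _ hx) (subset_convexHull ℝ _ hy)
    (by rw [sub_nonneg, div_le_one hb]; exact hab) (by positivity) (by ring)

lemma exists_succ {ι : Type*} [Finite ι] (q : ι → Fin 2 → ℝ)
    (hq : ∀ i, q i ∉ convexHull ℝ (q '' {l | l ≠ i})) (i : ι) (hne : ∃ l, l ≠ i) :
    ∃ j, j ≠ i ∧ ∀ l, l ≠ i → l ≠ j → 0 < dt (q i) (q j) (q l) := by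
  have : Nonempty {l // l ≠ i} := by obtain ⟨l, hl⟩ := hne; exact ⟨⟨l, hl⟩⟩
  have hr : range (fun l : {l // l ≠ i} => q l) = q '' {l | l ≠ i} := by
    ext y; simp
  obtain ⟨m, u, c, hc, hu, hd, hcol⟩ := slope_lemma (fun l : {l // l ≠ i} => q l) (q i)
    (by rw [hr]; exact hq i)
  obtain ⟨j, hj⟩ := Finite.exists_min m
  refine ⟨j, j.2, fun l hl hlj => ?_⟩
  have := hd j ⟨l, hl⟩
  simp only at this
  rw [this]
  have h1 := hj ⟨l, hl⟩
  rcases h1.lt_or_eq with h1 | h1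
  · exact mul_pos hc (mul_pos (mul_pos (hu _) (hu _)) (by linarith))
  exfalso
  have h2 := hcol _ _ h1
  simp only at h2
  rcases le_total (u j) (u ⟨l, hl⟩) with h | h
  · refine hq j (mem_hull_two (x := q i) (y := q l) ?_ ?_ (hu j) h h2)
    · exact ⟨i, fun e => j.2 e.symm, rfl⟩
    · exact ⟨l, hlj, rfl⟩
  · refine hq l (mem_hull_two (x := q i) (y := q j) ?_ ?_ (hu _) h (fun c => (h2 c).symm))
    · exact ⟨i, Ne.symm hl, rfl⟩
    · exact ⟨j, Ne.symm hlj, rfl⟩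

lemma fin_one {K : ℕ} (i : Fin (K + 3)) : i + 1 ≠ i := by simp

lemma fin_two {K : ℕ} (i : Fin (K + 3)) : i + 1 + 1 ≠ i := by
  rw [add_assoc, Ne, add_eq_left]
  intro h
  have := congrArg Fin.val h
  simp [Fin.val_add] at this
  rw [Nat.mod_eq_of_lt (by omega)] at this
  omega

lemma dt_nonneg_hull {s : Set (Fin 2 → ℝ)} {u v : Fin 2 → ℝ} (h : ∀ x ∈ s, 0 ≤ dt u v x)
    {x : Fin 2 → ℝ} (hx : x ∈ convexHull ℝ s) : 0 ≤ dt u v x := by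
  have hc : Convex ℝ {x | 0 ≤ dt u v x} := by
    intro a ha b hb c d hc hd hcd
    simp only [mem_ofPred_eq] at *
    have : dt u v (c • a + d • b) = c * dt u v a + d * dt u v b := by
      have hd' : d = 1 - c := by linarith
      subst hd'
      simp only [dt, Pi.add_apply, Pi.smul_apply, smul_eq_mul]; ring
    rw [this]; positivity
  exact convexHull_min h hc hx

lemma exists_order {K m : ℕ} (s : Fin m → Fin 2 → ℝ) (q : Fin (K + 3) → Fin 2 → ℝ)
    (hs : ∀ j, s j ∈ convexHull ℝ (range q))
    (hmin : ∀ (k' : ℕ) (q' : Fin k' → Fin 2 → ℝ), range q' ⊆ range q →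
      (∀ j, s j ∈ convexHull ℝ (range q')) → K + 3 ≤ k') :
    ∃ e : Fin (K + 3) → Fin (K + 3),
      (∀ i l, l ≠ i → l ≠ i + 1 → 0 < dt (q (e i)) (q (e (i + 1))) (q (e l))) ∧
      ∀ i j, 0 ≤ dt (q (e i)) (q (e (i + 1))) (s j) := by
  have hq : ∀ i, q i ∉ convexHull ℝ (q '' {l | l ≠ i}) := by
    intro i hi
    have h := hmin (K + 2) (q ∘ i.succAbove) (range_comp_subset_range _ _) ?_
    · omega
    intro j
    have hr : range (q ∘ i.succAbove) = q '' {l | l ≠ i} := by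
      rw [range_comp, Fin.range_succAbove]; rfl
    rw [hr]
    refine convexHull_min ?_ (convex_convexHull ℝ _) (hs j)
    rintro _ ⟨l, rfl⟩
    by_cases hl : l = i
    · rw [hl]; exact hi
    · exact subset_convexHull ℝ _ ⟨l, hl, rfl⟩
  have hex : ∀ i : Fin (K + 3), ∃ l, l ≠ i := fun i => exists_ne i
  choose σ hσ hpos using fun i => exists_succ q hq i (hex i)
  have htan : ∀ i j, 0 ≤ dt (q i) (q (σ i)) (s j) := by
    intro i j
    refine dt_nonneg_hull ?_ (hs j)
    rintro _ ⟨l, rfl⟩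
    by_cases h1 : l = i
    · subst h1; simp [dt]
    by_cases h2 : l = σ i
    · subst h2; apply le_of_eq; simp only [dt]; ring
    exact (hpos i l h1 h2).le
  obtain ⟨y, hy⟩ : ∃ y, y ∈ Function.periodicPts σ := by
    obtain ⟨a, b, hab, h⟩ := Finite.exists_ne_map_eq_of_infinite (fun n : ℕ => σ^[n] 0)
    wlog hlt : a < b generalizing a b
    · exact this b a hab.symm h.symm (by omega)
    refine ⟨σ^[a] 0, b - a, by omega, ?_⟩
    rw [Function.IsPeriodicPt, Function.IsFixedPt, ← Function.iterate_add_apply, h]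
    congr 2; omega
  have hr0 := Function.minimalPeriod_pos_of_mem_periodicPts hy
  have hper : σ^[Function.minimalPeriod σ y] y = y := Function.iterate_minimalPeriod
  have hr1 : Function.minimalPeriod σ y ≠ 1 := by
    intro h; rw [h] at hper; exact hσ y hper
  have hr2 : Function.minimalPeriod σ y ≠ 2 := by
    intro h; rw [h] at hper
    have hper : σ (σ y) = y := hper
    obtain ⟨z, hz1, hz2⟩ : ∃ z, z ≠ y ∧ z ≠ σ y := by
      by_contra hc
      push Not at hc
      have : (Finset.univ : Finset (Fin (K + 3))) ⊆ {y, σ y} := by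
        intro z _
        by_cases h : z = y
        · simp [h]
        · simp [hc z h]
      have h1 := Finset.card_le_card this
      have h2 := Finset.card_le_two (a := y) (b := σ y)
      simp at h1
      omega
    have a1 := hpos y z hz1 hz2
    have a2 := hpos (σ y) z hz2 (by rwa [hper])
    rw [hper] at a2
    simp only [dt] at a1 a2
    linarith
  obtain ⟨R, hR⟩ : ∃ R, Function.minimalPeriod σ y = R + 3 := ⟨_, (Nat.sub_add_cancel (by omega)).symm⟩
  let e : Fin (R + 3) → Fin (K + 3) := fun n => σ^[n.val] y
  have einj : Function.Injective e := by
    intro a b h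
    have := Function.iterate_injOn_Iio_minimalPeriod (f := σ) (x := y)
      (show a.val ∈ Iio _ by rw [hR]; exact a.2) (show b.val ∈ Iio _ by rw [hR]; exact b.2) h
    exact Fin.ext this
  have esucc : ∀ i, e (i + 1) = σ (e i) := by
    intro i
    simp only [e]
    have h1 : (i + 1 : Fin (R + 3)).val = (i.val + 1) % Function.minimalPeriod σ y := by
      rw [hR]; rfl
    rw [← Function.iterate_succ_apply' σ, h1, Function.iterate_mod_minimalPeriod_eq]
  have hp : ∀ i l, l ≠ i → l ≠ i + 1 → 0 < dt (q (e i)) (q (e (i + 1))) (q (e l)) := by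
    intro i l h1 h2
    rw [esucc]
    apply hpos
    · exact fun h => h1 (einj h)
    · rw [← esucc]; exact fun h => h2 (einj h)
  have ht : ∀ i j, 0 ≤ dt (q (e i)) (q (e (i + 1))) (s j) := by
    intro i j; rw [esucc]; exact htan _ _
  have hle : R + 3 ≤ K + 3 := by simpa using Fintype.card_le_of_injective e einj
  have hge : K + 3 ≤ R + 3 := by
    refine hmin _ (q ∘ e) (range_comp_subset_range _ _) fun j => ?_
    refine hull_of_dt (q ∘ e) (fun i => i + 1) (fin_one) (fun i => ⟨i + 1 + 1, fin_two i, fin_one _⟩) hp _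
      (fun i => ht i j)
  have : R = K := by omega
  subst this
  exact ⟨e, hp, ht⟩

open Filter Topology in
lemma continuous_dt {X : Type*} [TopologicalSpace X] {f g h : X → Fin 2 → ℝ} (hf : Continuous f)
    (hg : Continuous g) (hh : Continuous h) : Continuous fun x => dt (f x) (g x) (h x) := by
  unfold dt
  have := fun z => (continuous_apply z).comp hf
  have := fun z => (continuous_apply z).comp hg
  have := fun z => (continuous_apply z).comp hh
  fun_prop

def RatPt (x : Fin 2 → ℝ) : Prop := ∃ r : Fin 2 → ℚ, x = fun c => (r c : ℝ)

def gp (a d : Fin 2 → ℚ) (t : ℝ) : Fin 2 → ℝ := fun c => (a c : ℝ) + t * (d c : ℝ)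

def Germ (P : Set (Fin 2 → ℝ)) (x : Fin 2 → ℝ) : Prop :=
  ∃ a d : Fin 2 → ℚ, ∃ t : ℝ, x = gp a d t ∧ ∀ᶠ t' in nhds t, gp a d t' ∈ P

lemma continuous_gp (a d : Fin 2 → ℚ) : Continuous (gp a d) := by
  unfold gp; fun_prop

lemma ratPt_gp (a d : Fin 2 → ℚ) (r : ℚ) : RatPt (gp a d r) :=
  ⟨fun c => a c + r * d c, by ext c; simp [gp]⟩

lemma germ_of_rat {P : Set (Fin 2 → ℝ)} {x : Fin 2 → ℝ} (h : RatPt x) (hx : x ∈ P) : Germ P x := by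
  obtain ⟨r, rfl⟩ := h
  have h : ∀ t, gp r 0 t = fun c => (r c : ℝ) := by intro t; ext c; simp [gp]
  refine ⟨r, 0, 0, (h 0).symm, ?_⟩
  simp only [h]
  exact Filter.Eventually.of_forall fun _ => hx

lemma rat_of_meet {u v : Fin 2 → ℝ} (hu : RatPt u) (hv : RatPt v) (a d : Fin 2 → ℚ) (t : ℝ)
    (h : dt u v (gp a d t) = 0) (hc : (v 0 - u 0) * d 1 - (v 1 - u 1) * d 0 ≠ 0) :
    ∃ r : ℚ, t = r := by
  obtain ⟨u, rfl⟩ := hu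
  obtain ⟨v, rfl⟩ := hv
  refine ⟨-((v 0 - u 0) * (a 1 - u 1) - (v 1 - u 1) * (a 0 - u 0)) /
    ((v 0 - u 0) * d 1 - (v 1 - u 1) * d 0), ?_⟩
  push_cast
  rw [eq_div_iff hc]
  simp only [dt, gp] at h
  linear_combination h

structure Vld {K m : ℕ} (P : Set (Fin 2 → ℝ)) (s : Fin m → Fin 2 → ℝ)
    (q : Fin (K + 3) → Fin 2 → ℝ) : Prop where
  mem : ∀ i, q i ∈ P
  pos : ∀ i l, l ≠ i → l ≠ i + 1 → 0 < dt (q i) (q (i + 1)) (q l)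
  tan : ∀ i j, 0 ≤ dt (q i) (q (i + 1)) (s j)

lemma pos_eventually {K : ℕ} (q : Fin (K + 3) → Fin 2 → ℝ)
    (h : ∀ i l, l ≠ i → l ≠ i + 1 → 0 < dt (q i) (q (i + 1)) (q l)) :
    ∀ᶠ q' in nhds q, ∀ i l, l ≠ i → l ≠ i + 1 → 0 < dt (q' i) (q' (i + 1)) (q' l) := by
  refine Filter.eventually_all.2 fun i => Filter.eventually_all.2 fun l => ?_
  by_cases h1 : l = i
  · simp [h1]
  by_cases h2 : l = i + 1
  · simp [h2]
  have hc : Continuous fun q' : Fin (K + 3) → Fin 2 → ℝ => dt (q' i) (q' (i + 1)) (q' l) :=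
    continuous_dt (continuous_apply _) (continuous_apply _) (continuous_apply _)
  filter_upwards [hc.continuousAt.eventually (lt_mem_nhds (h i l h1 h2))] with q' hq' _ _
  exact hq'

lemma update_vld {K m : ℕ} {P : Set (Fin 2 → ℝ)} {s : Fin m → Fin 2 → ℝ}
    {q : Fin (K + 3) → Fin 2 → ℝ} (hV : Vld P s q) (i : Fin (K + 3)) :
    ∀ᶠ x in nhds (q (i + 1)), x ∈ P → (∀ j, 0 ≤ dt (q i) x (s j)) →
      (∀ j, 0 ≤ dt x (q (i + 1 + 1)) (s j)) → Vld P s (Function.update q (i + 1) x) := by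
  have hc : Continuous fun x => Function.update q (i + 1) x :=
    continuous_const.update (i + 1) continuous_id
  have ht : Filter.Tendsto (fun x => Function.update q (i + 1) x) (nhds (q (i + 1))) (nhds q) := by
    have := hc.tendsto (q (i + 1))
    rwa [Function.update_eq_self] at this
  filter_upwards [ht.eventually (pos_eventually q hV.pos)] with x hx hxP h1 h2
  refine ⟨?_, hx, ?_⟩
  · intro l
    by_cases hl : l = i + 1
    · subst hl; simpa using hxP
    · rw [Function.update_of_ne hl]; exact hV.mem l
  · intro l j
    by_cases hl : l = i + 1
    · subst hl
      rw [Function.update_self, Function.update_of_ne (fin_one _)]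
      exact h2 j
    by_cases hl' : l = i
    · subst hl'
      rw [Function.update_self, Function.update_of_ne (fin_one _).symm]
      exact h1 j
    · rw [Function.update_of_ne hl, Function.update_of_ne (fun h => hl' (add_right_cancel h))]
      exact hV.tan l j

lemma tight_left {Z A B s : Fin 2 → ℝ} (h : dt A B s = 0) (h1 : 0 < dt Z A B) (h2 : 0 ≤ dt Z A s)
    (x : Fin 2 → ℝ) (hx : 0 ≤ dt A x B) : 0 ≤ dt A x s := by
  have : dt A x s * dt Z A B = dt Z A s * dt A x B := by
    simp only [dt] at h ⊢
    linear_combination (((A 0 - Z 0) * (x 1 - Z 1) - (A 1 - Z 1) * (x 0 - Z 0))) * h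
  by_contra hc
  push Not at hc
  have := mul_neg_of_neg_of_pos hc h1
  have := mul_nonneg h2 hx
  linarith

lemma tight_right {W B C s : Fin 2 → ℝ} (h : dt B C s = 0) (h1 : 0 < dt C W B) (h2 : 0 ≤ dt C W s)
    (x : Fin 2 → ℝ) (hx : 0 ≤ dt x C B) : 0 ≤ dt x C s := by
  have : dt x C s * dt C W B = dt C W s * dt x C B := by
    simp only [dt] at h ⊢
    linear_combination (((W 0 - C 0) * (x 1 - C 1) - (W 1 - C 1) * (x 0 - C 0))) * h
  by_contra hc
  push Not at hc
  have := mul_neg_of_neg_of_pos hc h1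
  have := mul_nonneg h2 hx
  linarith

lemma move {K m : ℕ} {P : Set (Fin 2 → ℝ)} {s : Fin m → Fin 2 → ℝ}
    {q : Fin (K + 3) → Fin 2 → ℝ} (hV : Vld P s q) (i : Fin (K + 3)) :
    ∀ᶠ x in nhds (q (i + 1)), x ∈ P →
      (0 ≤ dt (q i) x (q (i + 1)) ∨ ∀ j, s j ≠ q i → dt (q i) (q (i + 1)) (s j) ≠ 0) →
      0 ≤ dt x (q (i + 1 + 1)) (q (i + 1)) → Vld P s (Function.update q (i + 1) x) := by
  have hL : ∀ᶠ x in nhds (q (i + 1)), ∀ j,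
      (0 ≤ dt (q i) x (q (i + 1)) ∨ ∀ j, s j ≠ q i → dt (q i) (q (i + 1)) (s j) ≠ 0) →
      0 ≤ dt (q i) x (s j) := by
    refine Filter.eventually_all.2 fun j => ?_
    by_cases h0 : dt (q i) (q (i + 1)) (s j) = 0
    · refine Filter.Eventually.of_forall fun x hx => ?_
      rcases hx with hx | hx
      · have e : i - 1 + 1 = i := sub_add_cancel i 1
        have h1 := hV.pos (i - 1) (i + 1)
          (fun h => fin_two (i - 1) (by rw [e]; exact h)) (by rw [e]; exact fin_one i)
        have h2 := hV.tan (i - 1) j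
        rw [e] at h1 h2
        exact tight_left h0 h1 h2 x hx
      · have : s j = q i := by
          by_contra h; exact hx j h h0
        rw [this]
        apply le_of_eq
        simp [dt]
    · have hc : Continuous fun x => dt (q i) x (s j) :=
        continuous_dt continuous_const continuous_id continuous_const
      filter_upwards [hc.continuousAt.eventually
        (lt_mem_nhds (lt_of_le_of_ne (hV.tan i j) (Ne.symm h0)))] with x hx _
      exact hx.le
  have hR : ∀ᶠ x in nhds (q (i + 1)), ∀ j,
      0 ≤ dt x (q (i + 1 + 1)) (q (i + 1)) → 0 ≤ dt x (q (i + 1 + 1)) (s j) := by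
    refine Filter.eventually_all.2 fun j => ?_
    by_cases h0 : dt (q (i + 1)) (q (i + 1 + 1)) (s j) = 0
    · refine Filter.Eventually.of_forall fun x hx => ?_
      exact tight_right h0 (hV.pos (i + 1 + 1) (i + 1) (fin_one _).symm (fin_two _).symm)
        (hV.tan _ j) x hx
    · have hc : Continuous fun x => dt x (q (i + 1 + 1)) (s j) :=
        continuous_dt continuous_id continuous_const continuous_const
      filter_upwards [hc.continuousAt.eventually
        (lt_mem_nhds (lt_of_le_of_ne (hV.tan (i + 1) j) (Ne.symm h0)))] with x hx _
      exact hx.le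
  filter_upwards [update_vld hV i, hL, hR] with x h1 h2 h3 hP hA hB
  exact h1 hP (fun j => h2 j hA) (fun j => h3 j hB)

lemma rat_side {t : ℝ} {p : ℝ → Prop} (h : ∀ᶠ x in nhds t, p x) (c : ℝ) :
    ∃ r : ℚ, p r ∧ 0 ≤ (r - t) * c := by
  obtain ⟨ε, hε, hp⟩ := Metric.eventually_nhds_iff.1 h
  rcases le_total 0 c with hc | hc
  · obtain ⟨r, h1, h2⟩ := exists_rat_btwn (show t < t + ε by linarith)
    exact ⟨r, hp (by rw [Real.dist_eq, abs_lt]; constructor <;> linarith),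
      mul_nonneg (by linarith) hc⟩
  · obtain ⟨r, h1, h2⟩ := exists_rat_btwn (show t - ε < t by linarith)
    exact ⟨r, hp (by rw [Real.dist_eq, abs_lt]; constructor <;> linarith),
      mul_nonneg_of_nonpos_of_nonpos (by linarith) hc⟩

/-- Rationalise one vertex lying on a rational germ. -/
lemma rationalise {K m : ℕ} {P : Set (Fin 2 → ℝ)} {s : Fin m → Fin 2 → ℝ}
    {q : Fin (K + 3) → Fin 2 → ℝ} (hV : Vld P s q) (i : Fin (K + 3))
    (a d : Fin 2 → ℚ) (t : ℝ) (hB : q (i + 1) = gp a d t) (hP : ∀ᶠ t' in nhds t, gp a d t' ∈ P)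
    (h : (∃ j, s j ≠ q i ∧ dt (q i) (q (i + 1)) (s j) = 0 ∧
        (s j 0 - q i 0) * d 1 - (s j 1 - q i 1) * d 0 = 0) ∨
      ∀ j, s j ≠ q i → dt (q i) (q (i + 1)) (s j) ≠ 0) :
    ∃ x, RatPt x ∧ Vld P s (Function.update q (i + 1) x) := by
  have hc := (continuous_gp a d).tendsto t
  rw [← hB] at hc
  have hm := hc.eventually (move hV i)
  obtain ⟨r, ⟨h1, h2⟩, h3⟩ := rat_side (hP.and hm)
    (d 1 * (q (i + 1) 0 - q (i + 1 + 1) 0) - d 0 * (q (i + 1) 1 - q (i + 1 + 1) 1))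
  refine ⟨gp a d r, ratPt_gp a d r, h2 h1 ?_ ?_⟩
  · rcases h with ⟨j, hj, hj1, hj2⟩ | h
    · left
      apply le_of_eq
      have hne : s j 0 - q i 0 ≠ 0 ∨ s j 1 - q i 1 ≠ 0 := by
        by_contra hh
        push Not at hh
        apply hj
        ext z; fin_cases z
        · exact sub_eq_zero.1 hh.1
        · exact sub_eq_zero.1 hh.2
      rw [hB] at hj1 ⊢
      simp only [dt, gp] at hj1 ⊢
      rcases hne with hne | hne
      · apply mul_left_cancel₀ hne
        linear_combination ((r - t) * (d 0 : ℝ)) * hj1 + (r - t) * (a 0 + t * d 0 - q i 0) * hj2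
      · apply mul_left_cancel₀ hne
        linear_combination ((r - t) * (d 1 : ℝ)) * hj1 + (r - t) * (a 1 + t * d 1 - q i 1) * hj2
    · right; exact h
  · convert h3 using 1
    rw [hB]
    simp only [dt, gp]
    ring

lemma germ_step {K m : ℕ} {P : Set (Fin 2 → ℝ)} {s : Fin m → Fin 2 → ℝ}
    (hT : ∀ x ∈ P, x ∈ interior P ∨ Germ P x)
    {q : Fin (K + 3) → Fin 2 → ℝ} (hV : Vld P s q) (i : Fin (K + 3)) :
    ∃ x, Germ P x ∧ Vld P s (Function.update q (i + 1) x) := by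
  rcases hT _ (hV.mem (i + 1)) with hI | hG
  swap
  · exact ⟨q (i + 1), hG, by rwa [Function.update_eq_self]⟩
  have hpos := hV.pos i (i + 1 + 1) (fin_two i) (fin_one _)
  obtain ⟨z, hz⟩ : ∃ z, q (i + 1) z - q i z ≠ 0 := by
    by_contra h
    push Not at h
    simp [dt, h] at hpos
  let f : ℝ → Fin 2 → ℝ := fun ε z' =>
    q (i + 1) z' + (ε - q (i + 1) z) / (q (i + 1) z - q i z) * (q (i + 1) z' - q i z')
  have hf : Continuous f := by
    refine continuous_pi fun z' => ?_
    simp only [f]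
    fun_prop
  have hf0 : f (q (i + 1) z) = q (i + 1) := by ext z'; simp [f]
  have ht := hf.tendsto (q (i + 1) z)
  rw [hf0] at ht
  obtain ⟨r, ⟨h1, h2⟩, h3⟩ := rat_side
    ((ht.eventually (move hV i)).and (ht.eventually (isOpen_interior.mem_nhds hI)))
    (1 / (q (i + 1) z - q i z))
  refine ⟨f r, ?_, h1 (interior_subset h2) (Or.inl ?_) ?_⟩
  · have hfz : f r z = r := by
      simp only [f]; field_simp; ring
    obtain ⟨z', hz'⟩ : ∃ z', z' ≠ z := exists_ne z
    have hzz : ∀ c, c = z ∨ c = z' := by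
      intro c
      fin_cases c <;> fin_cases z <;> fin_cases z' <;> simp_all
    refine ⟨fun c => if c = z then r else 0, fun c => if c = z then 0 else 1, f r z', ?_, ?_⟩
    · ext c
      rcases hzz c with rfl | rfl
      · simp [gp, hfz]
      · simp [gp, hz']
    · have hg := (continuous_gp (fun c => if c = z then r else 0)
        (fun c => if c = z then 0 else 1)).tendsto (f r z')
      have he : gp (fun c => if c = z then r else 0) (fun c => if c = z then 0 else 1) (f r z')
          = f r := by
        ext c
        rcases hzz c with rfl | rfl
        · simp [gp, hfz]
        · simp [gp, hz']
      rw [he] at hg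
      filter_upwards [hg.eventually (isOpen_interior.mem_nhds h2)] with t' ht'
      exact interior_subset ht'
  · apply le_of_eq
    simp only [dt, f]; ring
  · rw [mul_one_div] at h3
    have := mul_nonneg h3 hpos.le
    have e : dt (f r) (q (i + 1 + 1)) (q (i + 1)) = (r - q (i + 1) z) / (q (i + 1) z - q i z) *
        dt (q i) (q (i + 1)) (q (i + 1 + 1)) := by
      simp only [dt, f]
      ring
    rw [e]; exact this

lemma all_germ {K m : ℕ} {P : Set (Fin 2 → ℝ)} {s : Fin m → Fin 2 → ℝ}
    (hT : ∀ x ∈ P, x ∈ interior P ∨ Germ P x)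
    {q : Fin (K + 3) → Fin 2 → ℝ} (hV : Vld P s q) :
    ∃ q' : Fin (K + 3) → Fin 2 → ℝ, Vld P s q' ∧ ∀ i, Germ P (q' i) := by
  have : ∀ T : Finset (Fin (K + 3)), ∃ q' : Fin (K + 3) → Fin 2 → ℝ,
      Vld P s q' ∧ ∀ i ∈ T, Germ P (q' i) := by
    intro T
    induction T using Finset.induction_on with
    | empty => exact ⟨q, hV, by simp⟩
    | insert i T _ ih =>
      obtain ⟨q', h1, h2⟩ := ih
      obtain ⟨x, hx, h3⟩ := germ_step hT h1 (i - 1)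
      rw [sub_add_cancel] at h3
      refine ⟨_, h3, fun l hl => ?_⟩
      by_cases hli : l = i
      · subst hli; simpa using hx
      · rw [Function.update_of_ne hli]
        exact h2 l (by simpa [hli] using hl)
  obtain ⟨q', h1, h2⟩ := this Finset.univ
  exact ⟨q', h1, fun i => h2 i (Finset.mem_univ _)⟩

lemma rat_step {K m : ℕ} {P : Set (Fin 2 → ℝ)} {s : Fin m → Fin 2 → ℝ} (hs : ∀ j, RatPt (s j))
    {q : Fin (K + 3) → Fin 2 → ℝ} (hV : Vld P s q) (hG : ∀ i, Germ P (q i)) (i : Fin (K + 3))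
    (hi : RatPt (q i)) : ∃ x, RatPt x ∧ Vld P s (Function.update q (i + 1) x) := by
  by_cases hB : RatPt (q (i + 1))
  · exact ⟨_, hB, by rwa [Function.update_eq_self]⟩
  obtain ⟨a, d, t, h1, h2⟩ := hG (i + 1)
  refine rationalise hV i a d t h1 h2 ?_
  by_contra hc
  push Not at hc
  obtain ⟨hc1, j, hj1, hj2⟩ := hc
  have := hc1 j hj1 hj2
  obtain ⟨r, hr⟩ := rat_of_meet hi (hs j) a d t (by
    rw [h1] at hj2; simp only [dt] at hj2 ⊢; linear_combination -hj2) this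
  apply hB
  rw [h1, hr]
  exact ratPt_gp a d r

lemma all_rat {K m : ℕ} {P : Set (Fin 2 → ℝ)} {s : Fin m → Fin 2 → ℝ} (hs : ∀ j, RatPt (s j))
    {q : Fin (K + 3) → Fin 2 → ℝ} (hV : Vld P s q) (hG : ∀ i, Germ P (q i)) (i : Fin (K + 3))
    (hi : RatPt (q i)) : ∃ q' : Fin (K + 3) → Fin 2 → ℝ, Vld P s q' ∧ ∀ l, RatPt (q' l) := by
  have : ∀ n : ℕ, ∃ q' : Fin (K + 3) → Fin 2 → ℝ, Vld P s q' ∧ (∀ l, Germ P (q' l)) ∧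
      ∀ n' ≤ n, RatPt (q' (i + Fin.ofNat (K + 3) n')) := by
    intro n
    induction n with
    | zero => exact ⟨q, hV, hG, fun n' hn' => by
        have : n' = 0 := by omega
        subst this; simpa [Fin.ofNat] using hi⟩
    | succ n ih =>
      obtain ⟨q', h1, h2, h3⟩ := ih
      obtain ⟨x, hx, h4⟩ := rat_step hs h1 h2 _ (h3 n le_rfl)
      refine ⟨_, h4, ?_, ?_⟩
      · intro l
        by_cases hl : l = i + Fin.ofNat (K + 3) n + 1
        · have := h4.mem l
          subst hl
          rw [Function.update_self] at this ⊢
          exact germ_of_rat hx this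
        · rw [Function.update_of_ne hl]; exact h2 l
      · intro n' hn'
        by_cases hl : i + Fin.ofNat (K + 3) n' = i + Fin.ofNat (K + 3) n + 1
        · rw [hl, Function.update_self]; exact hx
        · rw [Function.update_of_ne hl]
          apply h3
          by_contra hh
          have : n' = n + 1 := by omega
          subst this
          apply hl
          rw [add_assoc]
          congr 1
          ext
          simp [Fin.ofNat, Fin.val_add]
  obtain ⟨q', h1, _, h3⟩ := this (K + 3)
  refine ⟨q', h1, fun l => ?_⟩
  have := h3 (l - i).val (by omega)
  have e : Fin.ofNat (K + 3) (l - i).val = l - i := by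
    ext; simp [Fin.ofNat, Nat.mod_eq_of_lt (l - i).isLt]
  rwa [e, add_sub_cancel] at this

lemma trichotomy {N : ℕ} (p : Fin N → Fin 2 → ℝ) (hp : ∀ i, RatPt (p i)) (x : Fin 2 → ℝ)
    (hx : x ∈ convexHull ℝ (range p)) :
    x ∈ interior (convexHull ℝ (range p)) ∨ Germ (convexHull ℝ (range p)) x := by
  obtain ⟨ι, _, z, w, hz, hai, hw, hw1, rfl⟩ := eq_pos_convex_span_of_mem_convexHull hx
  classical
  have hzr : ∀ i, RatPt (z i) := by
    intro i
    obtain ⟨l, hl⟩ := hz (mem_range_self i)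
    rw [← hl]; exact hp l
  have hzP : ∀ i, z i ∈ convexHull ℝ (range p) := fun i =>
    subset_convexHull ℝ _ (hz (mem_range_self i))
  have hcard : Fintype.card ι ≤ 3 := by
    have := hai.card_le_finrank_succ
    have h2 := Submodule.finrank_le (vectorSpan ℝ (range z))
    rw [Module.finrank_fin_fun] at h2
    omega
  have hcard0 : Fintype.card ι ≠ 0 := by
    intro h
    have := Fintype.card_eq_zero_iff.1 h
    simp at hw1
  have hcases : Fintype.card ι = 1 ∨ Fintype.card ι = 2 ∨ Fintype.card ι = 3 := by omega
  rcases hcases with h | h | h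
  · right
    obtain ⟨i, hi⟩ := Fintype.card_eq_one_iff.1 h
    have hu : (Finset.univ : Finset ι) = {i} := by ext y; simp [hi y]
    rw [hu, Finset.sum_singleton] at hw1 ⊢
    rw [hw1, one_smul]
    exact germ_of_rat (hzr i) (hzP i)
  · right
    obtain ⟨i, j, hij, hu⟩ := Finset.card_eq_two.1 (show (Finset.univ : Finset ι).card = 2 from h)
    rw [hu, Finset.sum_pair hij] at hw1 ⊢
    obtain ⟨r, hr⟩ := hzr i
    obtain ⟨r', hr'⟩ := hzr j
    have hg : ∀ t : ℝ, gp r (r' - r) t = (1 - t) • z i + t • z j := by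
      intro t
      ext c
      simp [gp, hr, hr']; ring
    refine ⟨r, r' - r, w j, ?_, ?_⟩
    · rw [hg, ← hw1, add_sub_cancel_right]
    · have h0 := hw j
      have h1 : w j < 1 := by have := hw i; linarith
      filter_upwards [Ioo_mem_nhds h0 h1] with t ht
      rw [hg]
      exact convex_convexHull ℝ _ (hzP i) (hzP j) (by linarith [ht.2]) ht.1.le (by ring)
  · left
    have htop : affineSpan ℝ (range z) = ⊤ := by
      rw [hai.affineSpan_eq_top_iff_card_eq_finrank_add_one, Module.finrank_fin_fun, h]
    let b : AffineBasis ι ℝ (Fin 2 → ℝ) := ⟨z, hai, htop⟩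
    have hb : interior (convexHull ℝ (range z)) = _ := b.interior_convexHull
    refine interior_mono (convexHull_mono hz) ?_
    rw [hb]
    intro i
    have e : ∑ i, w i • z i = Finset.univ.affineCombination ℝ b w := by
      rw [Finset.affineCombination_eq_linear_combination _ _ _ hw1]; rfl
    rw [e, b.coord_apply_combination_of_mem (Finset.mem_univ i) hw1]
    exact hw i

lemma quad_side {f0 f1 f2 : ℚ} {t : ℝ} (ht : ∀ r : ℚ, t ≠ r) (h : f0 + f1 * t + f2 * t ^ 2 = 0)
    {p : ℝ → Prop} (hp : ∀ᶠ x in nhds t, p x) (b : ℝ) (hb : b ≠ 0) :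
    ∃ r : ℚ, p r ∧ 0 ≤ (f0 + f1 * r + f2 * r ^ 2) * b := by
  by_cases hc : (f1 + 2 * f2 * t : ℝ) = 0
  · have h2 : f2 = 0 := by
      by_contra h2
      have h2' : (f2 : ℝ) ≠ 0 := by exact_mod_cast h2
      apply ht (-f1 / (2 * f2))
      push_cast
      rw [eq_div_iff (by positivity)]
      linarith
    subst h2
    have h1 : f1 = 0 := by simpa using hc
    subst h1
    have h0 : f0 = 0 := by simpa using h
    subst h0
    obtain ⟨r, hr, _⟩ := rat_side hp 0
    exact ⟨r, hr, by simp⟩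
  · have hcb : 0 < (f1 + f2 * (t + t)) * b * ((f1 + 2 * f2 * t) * b) := by
      have : (f1 + f2 * (t + t)) * b * ((f1 + 2 * f2 * t) * b) = ((f1 + 2 * f2 * t) * b) ^ 2 := by
        ring
      rw [this]; positivity
    have hcont : Continuous fun x : ℝ => (f1 + f2 * (x + t)) * b * ((f1 + 2 * f2 * t) * b) := by
      fun_prop
    have hev := hcont.continuousAt.eventually (lt_mem_nhds hcb)
    obtain ⟨r, ⟨h1, h2⟩, h3⟩ := rat_side (hp.and hev) ((f1 + 2 * f2 * t) * b)
    refine ⟨r, h1, ?_⟩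
    have e : (f0 + f1 * r + f2 * r ^ 2) * b = (r - t) * ((f1 + f2 * (r + t)) * b) := by
      linear_combination b * h
    rw [e]
    have h4 := mul_nonneg h3 h2.le
    have h5 : 0 < ((f1 + 2 * f2 * t) * b) ^ 2 := by positivity
    by_contra hh
    push Not at hh
    have := mul_neg_of_neg_of_pos hh h5
    nlinarith

noncomputable def psi (al be ga de : ℕ → ℚ) : ℕ → ℝ → ℝ
  | 0, x => x
  | n + 1, x => (al n + be n * psi al be ga de n x) / (ga n + de n * psi al be ga de n x)

lemma psi_rat (al be ga de : ℕ → ℚ) (n : ℕ) (r : ℚ) : ∃ r' : ℚ, psi al be ga de n r = r' := by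
  induction n with
  | zero => exact ⟨r, rfl⟩
  | succ n ih =>
    obtain ⟨r', h⟩ := ih
    exact ⟨(al n + be n * r') / (ga n + de n * r'), by simp [psi, h]⟩

lemma psi_prop (al be ga de : ℕ → ℚ) (T : ℕ → ℝ) (h1 : ∀ n, (ga n + de n * T n : ℝ) ≠ 0)
    (h2 : ∀ n, T (n + 1) * (ga n + de n * T n) = al n + be n * T n) (n : ℕ) :
    psi al be ga de n (T 0) = T n ∧ ContinuousAt (psi al be ga de n) (T 0) ∧
    ∃ c0 c1 e0 e1 : ℚ, (e0 + e1 * T 0 : ℝ) ≠ 0 ∧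
      ∀ᶠ x in nhds (T 0), psi al be ga de n x * (e0 + e1 * x) = c0 + c1 * x := by
  induction n with
  | zero => exact ⟨rfl, continuousAt_id, 0, 1, 1, 0, by simp, by simp [psi]⟩
  | succ n ih =>
    obtain ⟨i1, i2, c0, c1, e0, e1, i3, i4⟩ := ih
    have hden : ContinuousAt (fun x => (ga n + de n * psi al be ga de n x : ℝ)) (T 0) := by
      fun_prop
    have hne : (ga n + de n * psi al be ga de n (T 0) : ℝ) ≠ 0 := by rw [i1]; exact h1 n
    refine ⟨?_, ?_, al n * e0 + be n * c0, al n * e1 + be n * c1, ga n * e0 + de n * c0,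
      ga n * e1 + de n * c1, ?_, ?_⟩
    · simp only [psi]
      rw [i1, div_eq_iff (h1 n), h2]
    · have : psi al be ga de (n + 1) = fun x => (al n + be n * psi al be ga de n x) /
          (ga n + de n * psi al be ga de n x) := rfl
      rw [this]
      exact ContinuousAt.div (by fun_prop) hden hne
    · have h0 := i4.self_of_nhds
      rw [i1] at h0
      push_cast
      have : (ga n * e0 + de n * c0 + (ga n * e1 + de n * c1) * T 0 : ℝ) =
        (ga n + de n * T n) * (e0 + e1 * T 0) := by linear_combination -de n * h0
      rw [this]
      exact mul_ne_zero (h1 n) i3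
    · filter_upwards [i4, hden.eventually_ne hne] with x hx hx2
      simp only [psi]
      push_cast
      rw [div_mul_eq_mul_div, div_eq_iff hx2]
      have : (c0 : ℝ) = psi al be ga de n x * (e0 + e1 * x) - c1 * x := by linarith
      rw [this]
      ring

lemma unique_tight {A s s' : Fin 2 → ℝ} (hs : RatPt s) (hs' : RatPt s') (a d : Fin 2 → ℚ) (t : ℝ)
    (hAB : A ≠ gp a d t) (hB : ¬ RatPt (gp a d t))
    (h : dt A (gp a d t) s = 0) (h' : dt A (gp a d t) s' = 0)
    (hc : (s 0 - A 0) * d 1 - (s 1 - A 1) * d 0 ≠ 0) : s' = s := by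
  by_contra hne
  obtain ⟨z, hz⟩ : ∃ z, gp a d t z - A z ≠ 0 := by
    by_contra hh
    push Not at hh
    apply hAB
    ext z; linarith [hh z]
  obtain ⟨y, hy⟩ : ∃ y, s' y - s y ≠ 0 := by
    by_contra hh
    push Not at hh
    apply hne
    ext z; linarith [hh z]
  have e1 : dt A s s' = 0 := by
    apply mul_left_cancel₀ hz
    simp only [dt] at h h' ⊢
    fin_cases z
    · simp only [Fin.zero_eta] at *
      linear_combination (s 0 - A 0) * h' - (s' 0 - A 0) * h
    · simp only [Fin.mk_one] at *
      linear_combination (s 1 - A 1) * h' - (s' 1 - A 1) * h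
  have e2 : dt s s' (gp a d t) = 0 := by
    have : dt s s' (gp a d t) = dt A s s' + dt A (gp a d t) s - dt A (gp a d t) s' := by
      simp only [dt]; ring
    rw [this, e1, h, h']; simp
  by_cases hcr : (s' 0 - s 0) * d 1 - (s' 1 - s 1) * d 0 = 0
  · apply hc
    apply mul_left_cancel₀ hy
    simp only [dt] at e1
    fin_cases y
    · simp only [Fin.zero_eta] at *
      linear_combination (s 0 - A 0) * hcr + d 0 * e1
    · simp only [Fin.mk_one] at *
      linear_combination (s 1 - A 1) * hcr + d 1 * e1
  · obtain ⟨r, hr⟩ := rat_of_meet hs hs' a d t e2 hcr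
    apply hB
    rw [hr]; exact ratPt_gp a d r

lemma dt_gp (a d a' d' w : Fin 2 → ℚ) (y y' : ℝ) :
    dt (gp a d y) (gp a' d' y') (fun c => (w c : ℝ)) =
      y' * (((d' 0 * (w 1 - a 1) - d' 1 * (w 0 - a 0) : ℚ) : ℝ)
          + ((d' 1 * d 0 - d' 0 * d 1 : ℚ) : ℝ) * y)
      - (((-(a' 0 * w 1 - a' 1 * w 0 - a' 0 * a 1 - a 0 * w 1 + a' 1 * a 0 + a 1 * w 0) : ℚ) : ℝ)
          + ((-(-a' 0 * d 1 - d 0 * w 1 + a' 1 * d 0 + d 1 * w 0) : ℚ) : ℝ) * y) := by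
  simp only [dt, gp]
  push_cast
  ring

lemma cycle {K m : ℕ} {P : Set (Fin 2 → ℝ)} (s : Fin m → Fin 2 → ℚ)
    {q : Fin (K + 3) → Fin 2 → ℝ} (hV : Vld P (fun j c => (s j c : ℝ)) q)
    (a d : Fin (K + 3) → Fin 2 → ℚ) (t : Fin (K + 3) → ℝ) (hq : ∀ i, q i = gp (a i) (d i) (t i))
    (hP : ∀ i, ∀ᶠ t' in nhds (t i), gp (a i) (d i) t' ∈ P) (hirr : ∀ i, ¬ RatPt (q i))
    (jj : Fin (K + 3) → Fin m)
    (hj : ∀ i, dt (q i) (q (i + 1)) (fun c => (s (jj i) c : ℝ)) = 0)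
    (hc : ∀ i, ((s (jj i) 0 : ℝ) - q i 0) * d (i + 1) 1 - (s (jj i) 1 - q i 1) * d (i + 1) 0 ≠ 0) :
    ∃ q' : Fin (K + 3) → Fin 2 → ℝ, Vld P (fun j c => (s j c : ℝ)) q' ∧ ∀ l, RatPt (q' l) := by
  have htirr : ∀ r : ℚ, t 0 ≠ r := by
    intro r hr
    apply hirr 0
    rw [hq, hr]; exact ratPt_gp _ _ r
  have huniq : ∀ i j, dt (q i) (q (i + 1)) (fun c => (s j c : ℝ)) = 0 → s j = s (jj i) := by
    intro i j h
    have hpos := hV.pos i (i + 1 + 1) (fin_two i) (fin_one _)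
    have h1 := hj i
    have h2 := hirr (i + 1)
    have h3 : q i ≠ q (i + 1) := by
      intro e
      rw [e] at hpos
      simp [dt] at hpos
    rw [hq (i + 1)] at h h1 h2 h3
    have := unique_tight (s := fun c => (s (jj i) c : ℝ)) (s' := fun c => (s j c : ℝ))
      ⟨_, rfl⟩ ⟨_, rfl⟩ (a (i + 1)) (d (i + 1)) (t (i + 1)) h3 h2 h1 h (hc i)
    ext c
    exact_mod_cast congrFun this c
  -- coefficients
  obtain ⟨al, be, ga, de, hco, hden⟩ : ∃ al be ga de : Fin (K + 3) → ℚ,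
      (∀ i y y', dt (gp (a i) (d i) y) (gp (a (i + 1)) (d (i + 1)) y')
        (fun c => (s (jj i) c : ℝ)) = y' * (ga i + de i * y) - (al i + be i * y)) ∧
      ∀ i, (ga i + de i * t i : ℝ) ≠ 0 := by
    refine ⟨_, _, _, _, fun i y y' => dt_gp (a i) (d i) (a (i + 1)) (d (i + 1)) (s (jj i)) y y',
      fun i h => hc i ?_⟩
    rw [hq]
    simp only [gp]
    push_cast at h
    linear_combination -h
  have hrec : ∀ i, t (i + 1) * (ga i + de i * t i) = al i + be i * t i := by
    intro i
    have := hj i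
    rw [hq i, hq (i + 1), hco] at this
    linarith
  let o : ℕ → Fin (K + 3) := fun n => Fin.ofNat (K + 3) n
  have ho : ∀ n, o (n + 1) = o n + 1 := by
    intro n; ext; simp [o, Fin.ofNat, Fin.val_add]
  have ho0 : o 0 = 0 := by ext; simp [o, Fin.ofNat]
  have hov : ∀ i : Fin (K + 3), o i.val = i := by
    intro i; ext; simp [o, Fin.ofNat, Nat.mod_eq_of_lt i.isLt]
  let ψ := psi (al ∘ o) (be ∘ o) (ga ∘ o) (de ∘ o)
  have hψ := psi_prop (al ∘ o) (be ∘ o) (ga ∘ o) (de ∘ o) (t ∘ o) (fun n => hden (o n))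
    (fun n => by simp only [Function.comp]; rw [ho]; exact hrec (o n))
  have hT0 : (t ∘ o) 0 = t 0 := by simp [ho0]
  rw [hT0] at hψ
  let Q : ℝ → Fin (K + 3) → Fin 2 → ℝ := fun x i => gp (a i) (d i) (ψ i.val x)
  have hψ0 : ∀ i : Fin (K + 3), ψ i.val (t 0) = t i := by
    intro i
    have := (hψ i.val).1
    simp only [Function.comp, hov] at this
    exact this
  have hψt : ∀ i : Fin (K + 3), Filter.Tendsto (ψ i.val) (nhds (t 0)) (nhds (t i)) := by
    intro i
    have := (hψ i.val).2.1.tendsto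
    rw [(hψ i.val).1] at this
    simp only [Function.comp, hov] at this
    exact this
  have hQt : Filter.Tendsto Q (nhds (t 0)) (nhds q) := by
    refine tendsto_pi_nhds.2 fun i => ?_
    rw [hq i]
    exact ((continuous_gp (a i) (d i)).tendsto (t i)).comp (hψt i)
  have ev1 : ∀ᶠ x in nhds (t 0), ∀ i, Q x i ∈ P :=
    Filter.eventually_all.2 fun i => (hψt i).eventually (hP i)
  have ev2 := hQt.eventually (pos_eventually q hV.pos)
  have ev3 : ∀ᶠ x in nhds (t 0), ∀ i j, dt (q i) (q (i + 1)) (fun c => (s j c : ℝ)) ≠ 0 →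
      0 < dt (Q x i) (Q x (i + 1)) (fun c => (s j c : ℝ)) := by
    refine Filter.eventually_all.2 fun i => Filter.eventually_all.2 fun j => ?_
    by_cases h0 : dt (q i) (q (i + 1)) (fun c => (s j c : ℝ)) = 0
    · simp [h0]
    have hcc : Continuous fun q' : Fin (K + 3) → Fin 2 → ℝ =>
        dt (q' i) (q' (i + 1)) (fun c => (s j c : ℝ)) :=
      continuous_dt (continuous_apply _) (continuous_apply _) continuous_const
    filter_upwards [hQt.eventually (hcc.continuousAt.eventually
      (lt_mem_nhds (lt_of_le_of_ne (hV.tan i j) (Ne.symm h0))))] with x hx _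
    exact hx
  have ev4 : ∀ᶠ x in nhds (t 0), ∀ i : Fin (K + 3), (ga i + de i * ψ i.val x : ℝ) ≠ 0 := by
    refine Filter.eventually_all.2 fun i => ?_
    have hcc : Continuous fun y : ℝ => (ga i + de i * y : ℝ) := by fun_prop
    exact (hψt i).eventually (hcc.continuousAt.eventually_ne (hden i))
  obtain ⟨c0, c1, e0, e1, hB, ev5⟩ := (hψ (Fin.last (K + 2)).val).2.2
  have ev6 : ∀ᶠ x in nhds (t 0), 0 < (e0 + e1 * x : ℝ) * (e0 + e1 * t 0) := by
    have hcc : Continuous fun x : ℝ => (e0 + e1 * x : ℝ) * (e0 + e1 * t 0) := by fun_prop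
    refine hcc.continuousAt.eventually (lt_mem_nhds ?_)
    exact mul_self_pos.2 hB
  have hlast : (Fin.last (K + 2) : Fin (K + 3)) + 1 = 0 := Fin.last_add_one (K + 2)
  have key : ∀ x : ℝ, ψ (Fin.last (K + 2)).val x * (e0 + e1 * x) = c0 + c1 * x →
      (x * (ga (Fin.last (K + 2)) + de (Fin.last (K + 2)) * ψ (Fin.last (K + 2)).val x) -
        (al (Fin.last (K + 2)) + be (Fin.last (K + 2)) * ψ (Fin.last (K + 2)).val x)) *
        (e0 + e1 * x) =
      ((-(al (Fin.last (K + 2)) * e0 + be (Fin.last (K + 2)) * c0) : ℚ) : ℝ) +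
      ((ga (Fin.last (K + 2)) * e0 + de (Fin.last (K + 2)) * c0 - al (Fin.last (K + 2)) * e1 -
        be (Fin.last (K + 2)) * c1 : ℚ) : ℝ) * x +
      ((ga (Fin.last (K + 2)) * e1 + de (Fin.last (K + 2)) * c1 : ℚ) : ℝ) * x ^ 2 := by
    intro x hx
    generalize ψ (Fin.last (K + 2)).val x = y at hx ⊢
    push_cast
    linear_combination (x * de (Fin.last (K + 2)) - be (Fin.last (K + 2))) * hx
  have hF0 := key (t 0) ev5.self_of_nhds
  have hz : t 0 * (ga (Fin.last (K + 2)) + de (Fin.last (K + 2)) * ψ (Fin.last (K + 2)).val (t 0)) -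
        (al (Fin.last (K + 2)) + be (Fin.last (K + 2)) * ψ (Fin.last (K + 2)).val (t 0)) = 0 := by
    rw [hψ0]
    have := hrec (Fin.last (K + 2))
    rw [hlast] at this
    linarith
  rw [hz, zero_mul] at hF0
  obtain ⟨r, ⟨r1, r2, r3, r4, r5, r6⟩, hr⟩ := quad_side htirr hF0.symm
    (ev1.and (ev2.and (ev3.and (ev4.and (ev5.and ev6))))) (e0 + e1 * t 0) hB
  refine ⟨Q r, ⟨r1, r2, ?_⟩, ?_⟩
  · intro i j
    by_cases h0 : dt (q i) (q (i + 1)) (fun c => (s j c : ℝ)) = 0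
    swap
    · exact (r3 i j h0).le
    rw [huniq i j h0]
    simp only [Q]
    rw [hco]
    by_cases hi : i = Fin.last (K + 2)
    · subst hi
      rw [hlast]
      rw [← key r r5] at hr
      have e : ψ (0 : Fin (K + 3)).val r = r := rfl
      rw [e]
      by_contra hh
      push Not at hh
      have := mul_neg_of_neg_of_pos hh r6
      rw [← mul_assoc] at this
      linarith
    · apply le_of_eq
      have hv : (i + 1).val = i.val + 1 := by
        rw [Fin.val_add_one]; simp [hi]
      rw [hv]
      have h4 := r4 i
      have : ψ (i.val + 1) r = (al (o i.val) + be (o i.val) * ψ i.val r) /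
        (ga (o i.val) + de (o i.val) * ψ i.val r) := rfl
      rw [this, hov, div_mul_cancel₀ _ h4]
      simp
  · intro l
    obtain ⟨r', hr'⟩ := psi_rat (al ∘ o) (be ∘ o) (ga ∘ o) (de ∘ o) l.val r
    have : Q r l = gp (a l) (d l) r' := by simp only [Q, ψ]; rw [hr']
    rw [this]
    exact ratPt_gp _ _ _

lemma main3 {K m : ℕ} {P : Set (Fin 2 → ℝ)} (s : Fin m → Fin 2 → ℚ)
    (hT : ∀ x ∈ P, x ∈ interior P ∨ Germ P x)
    {q : Fin (K + 3) → Fin 2 → ℝ} (hV : Vld P (fun j c => (s j c : ℝ)) q) :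
    ∃ q' : Fin (K + 3) → Fin 2 → ℝ, Vld P (fun j c => (s j c : ℝ)) q' ∧ ∀ l, RatPt (q' l) := by
  by_contra hno
  obtain ⟨q, hV, hG⟩ := all_germ hT hV
  have hs : ∀ j, RatPt ((fun j c => (s j c : ℝ)) j) := fun j => ⟨s j, rfl⟩
  have hirr : ∀ i, ¬ RatPt (q i) := fun i hi => hno (all_rat hs hV hG i hi)
  choose a d t hq hP using hG
  have hstep : ∀ i, ∃ j, dt (q i) (q (i + 1)) (fun c => (s j c : ℝ)) = 0 ∧
      ((s j 0 : ℝ) - q i 0) * d (i + 1) 1 - (s j 1 - q i 1) * d (i + 1) 0 ≠ 0 := by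
    intro i
    by_contra hh
    push Not at hh
    obtain ⟨x, hx, hVx⟩ := rationalise hV i (a (i + 1)) (d (i + 1)) (t (i + 1)) (hq _) (hP _) (by
      by_contra hcc
      push Not at hcc
      obtain ⟨h1, j, h2, h3⟩ := hcc
      exact h1 j h2 h3 (hh j h3))
    refine hno (all_rat hs hVx ?_ (i + 1) (by rwa [Function.update_self]))
    intro l
    by_cases hl : l = i + 1
    · have := hVx.mem l
      subst hl
      rw [Function.update_self] at this ⊢
      exact germ_of_rat hx this
    · rw [Function.update_of_ne hl]
      exact ⟨_, _, _, hq l, hP l⟩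
  choose jj hj hc using hstep
  exact hno (cycle s hV a d t hq hP hirr jj hj hc)

theorem stmt11 {N m : ℕ} (p : Fin N → Fin 2 → ℚ) (s : Fin m → Fin 2 → ℚ)
    (P S : Set (Fin 2 → ℝ))
    (hP : P = convexHull ℝ (Set.range fun i : Fin N => fun x => ((p i x : ℝ))))
    (hS : S = convexHull ℝ (Set.range fun j : Fin m => fun x => ((s j x : ℝ))))
    (hSP : S ⊆ P)
    (k : ℕ)
    (hk : IsLeast {k : ℕ | ∃ q : Fin k → Fin 2 → ℝ,
        S ⊆ convexHull ℝ (Set.range q) ∧ convexHull ℝ (Set.range q) ⊆ P} k) :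
    ∃ q : Fin k → Fin 2 → ℚ,
      S ⊆ convexHull ℝ (Set.range fun i => fun x => ((q i x : ℝ))) ∧
      convexHull ℝ (Set.range fun i => fun x => ((q i x : ℝ))) ⊆ P := by
  have hPc : Convex ℝ P := by rw [hP]; exact convex_convexHull ℝ _
  have hsub : ∀ T : Set (Fin 2 → ℝ), Convex ℝ T → (∀ j, (fun x => (s j x : ℝ)) ∈ T) → S ⊆ T := by
    intro T hT h
    rw [hS]
    refine convexHull_min ?_ hT
    rintro _ ⟨j, rfl⟩
    exact h j
  have hsS : ∀ j, (fun x => (s j x : ℝ)) ∈ S := by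
    intro j; rw [hS]; exact subset_convexHull ℝ _ ⟨j, rfl⟩
  obtain ⟨⟨q, hq1, hq2⟩, hmin⟩ := hk
  have hsq : ∀ j, (fun x => (s j x : ℝ)) ∈ convexHull ℝ (range q) := fun j => hq1 (hsS j)
  have hqP : ∀ i, q i ∈ P := fun i => hq2 (subset_convexHull ℝ _ (mem_range_self i))
  have hm0 : k ≠ 0 → Nonempty (Fin m) := by
    intro hk0
    by_contra hne
    rw [not_nonempty_iff] at hne
    have h0 := hmin (show 0 ∈ _ from ⟨Fin.elim0, hsub _ (convex_convexHull ℝ _)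
      (fun j => hne.elim j), convexHull_min (by rintro _ ⟨i, _⟩; exact i.elim0) hPc⟩)
    omega
  have hfin : ∀ q' : Fin k → Fin 2 → ℚ,
      (∀ j, (fun x => (s j x : ℝ)) ∈ convexHull ℝ (range fun i => fun x => (q' i x : ℝ))) →
      (∀ i, (fun x => (q' i x : ℝ)) ∈ P) → ∃ q : Fin k → Fin 2 → ℚ,
      S ⊆ convexHull ℝ (Set.range fun i => fun x => ((q i x : ℝ))) ∧
      convexHull ℝ (Set.range fun i => fun x => ((q i x : ℝ))) ⊆ P := by
    intro q' h1 h2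
    refine ⟨q', hsub _ (convex_convexHull ℝ _) h1, convexHull_min ?_ hPc⟩
    rintro _ ⟨i, rfl⟩
    exact h2 i
  match k, q, hq1, hq2, hmin, hsq, hqP, hm0, hfin with
  | 0, q, hq1, hq2, hmin, hsq, hqP, hm0, hfin =>
    refine hfin Fin.elim0 (fun j => ?_) (fun i => i.elim0)
    have := hsq j
    simp at this
  | 1, q, hq1, hq2, hmin, hsq, hqP, hm0, hfin =>
    obtain ⟨j0⟩ := hm0 (by omega)
    have hall : ∀ j, (fun x => (s j x : ℝ)) = q 0 := by
      intro j
      have := hsq j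
      rw [range_unique, convexHull_singleton] at this
      exact this
    refine hfin (fun _ => s j0) (fun j => ?_) (fun i => hSP (hsS j0))
    rw [hall j, ← hall j0]
    exact subset_convexHull ℝ _ ⟨0, rfl⟩
  | 2, q, hq1, hq2, hmin, hsq, hqP, hm0, hfin =>
    have := hm0 (by omega)
    have hrange : range q = {q 0, q 1} := by
      ext y
      simp only [mem_range, Fin.exists_fin_two, mem_insert_iff, mem_singleton_iff, eq_comm]
    have hpar : ∀ j, ∃ t : ℝ, ∀ x, (s j x : ℝ) = q 0 x + t * (q 1 x - q 0 x) := by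
      intro j
      have := hsq j
      rw [hrange, convexHull_pair, segment_eq_image'] at this
      obtain ⟨t, _, ht⟩ := this
      refine ⟨t, fun x => ?_⟩
      have := congrFun ht x
      simp at this
      linarith
    choose t ht using hpar
    obtain ⟨j0, h0⟩ := Finite.exists_min t
    obtain ⟨j1, h1⟩ := Finite.exists_max t
    refine hfin ![s j0, s j1] (fun j => ?_) ?_
    · have m0 : (fun x => (s j0 x : ℝ)) ∈ range fun i => fun x => ((![s j0, s j1] i x : ℚ) : ℝ) :=
        ⟨0, rfl⟩
      have m1 : (fun x => (s j1 x : ℝ)) ∈ range fun i => fun x => ((![s j0, s j1] i x : ℚ) : ℝ) :=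
        ⟨1, rfl⟩
      rcases (h0 j).eq_or_lt with h | h
      · have : (fun x => (s j x : ℝ)) = fun x => (s j0 x : ℝ) := by
          ext x; rw [ht, ht, h]
        rw [this]
        exact subset_convexHull ℝ _ m0
      · refine mem_hull_two m0 m1 (a := t j - t j0) (b := t j1 - t j0) (by linarith)
          (by linarith [h1 j]) (fun c => ?_)
        simp only [ht]
        ring
    · intro i
      fin_cases i
      · exact hSP (hsS j0)
      · exact hSP (hsS j1)
  | K + 3, q, hq1, hq2, hmin, hsq, hqP, hm0, hfin =>
    obtain ⟨e, he1, he2⟩ := exists_order (fun j x => (s j x : ℝ)) q hsq (by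
      intro k' q' hr h
      refine hmin ⟨q', hsub _ (convex_convexHull ℝ _) h, ?_⟩
      exact (convexHull_mono hr).trans hq2)
    have hV : Vld P (fun j c => (s j c : ℝ)) (q ∘ e) := ⟨fun i => hqP _, he1, he2⟩
    have hT : ∀ x ∈ P, x ∈ interior P ∨ Germ P x := by
      rw [hP]
      exact trichotomy _ (fun i => ⟨p i, rfl⟩)
    obtain ⟨q', hV', hR⟩ := main3 s hT hV
    choose r hr using hR
    have hr' : (fun i => fun x => (r i x : ℝ)) = q' := by
      funext i; exact (hr i).symm
    refine hfin r (fun j => ?_) (fun i => ?_)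
    · rw [hr']
      exact hull_of_dt q' (fun i => i + 1) fin_one (fun i => ⟨i + 1 + 1, fin_two i, fin_one _⟩)
        hV'.pos _ (fun i => hV'.tan i j)
    · rw [← hr i]; exact hV'.mem i
end

section
/- Let M ∈ ℚ_+^{6×6} be the matrix with rows (1/8, 1/2, 17/22, 0, 0, 0), (0, 0, 0, 1/2, 3/4, 7/12), (3/4, 3/4, 3/11, 2, 1/2, 1/6), (1/4, 1/4, 8/11, 1/4, 19/8, 55/24), (1/2, 1/8, 1/11, 1/8, 15/16, 17/16), (11/16, 5/16, 7/44, 1/16, 7/32, 43/96). Then rank(M) = 4, rrk+(M) = 5, and rk+(M) = 5. -/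
open Matrix

/-- The nonnegative rank of a nonnegative real matrix: the smallest inner dimension
of a factorization `M = W * H` into nonnegative matrices. -/
noncomputable def rkPos {n m : ℕ} (M : Matrix (Fin n) (Fin m) ℝ) : ℕ :=
  sInf {d : ℕ | ∃ W : Matrix (Fin n) (Fin d) ℝ, ∃ H : Matrix (Fin d) (Fin m) ℝ,
    (∀ i k, 0 ≤ W i k) ∧ (∀ k j, 0 ≤ H k j) ∧ M = W * H}

/-- The restricted nonnegative rank: the smallest inner dimension of a nonnegative
factorization `M = W * H` with `rank W = rank M`. -/
noncomputable def rrkPos {n m : ℕ} (M : Matrix (Fin n) (Fin m) ℝ) : ℕ :=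
  sInf {d : ℕ | ∃ W : Matrix (Fin n) (Fin d) ℝ, ∃ H : Matrix (Fin d) (Fin m) ℝ,
    (∀ i k, 0 ≤ W i k) ∧ (∀ k j, 0 ≤ H k j) ∧ M = W * H ∧ W.rank = M.rank}

/-- The `6 × 6` rational matrix of Theorem 5 of the paper. -/
def paperMatrix : Matrix (Fin 6) (Fin 6) ℚ :=
  !![1/8,   1/2,  17/22, 0,    0,     0;
     0,     0,    0,     1/2,  3/4,   7/12;
     3/4,   3/4,  3/11,  2,    1/2,   1/6;
     1/4,   1/4,  8/11,  1/4,  19/8,  55/24;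
     1/2,   1/8,  1/11,  1/8,  15/16, 17/16;
     11/16, 5/16, 7/44,  1/16, 7/32,  43/96]


noncomputable def realM : Matrix (Fin 6) (Fin 6) ℝ :=
  !![1/8,   1/2,  17/22, 0,    0,     0;
     0,     0,    0,     1/2,  3/4,   7/12;
     3/4,   3/4,  3/11,  2,    1/2,   1/6;
     1/4,   1/4,  8/11,  1/4,  19/8,  55/24;
     1/2,   1/8,  1/11,  1/8,  15/16, 17/16;
     11/16, 5/16, 7/44,  1/16, 7/32,  43/96]

lemma map_eq_realM : paperMatrix.map ((↑) : ℚ → ℝ) = realM := by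
  ext i j
  fin_cases i <;> fin_cases j <;> norm_num [paperMatrix, realM]

noncomputable def matB : Matrix (Fin 6) (Fin 4) ℝ :=
  !![1, 0, 0, 0;
     0, 1, 0, 0;
     0, 0, 1, 0;
     0, 0, 0, 1;
     -1, -9/4, 1/2, 1;
     -1, -27/8, 3/4, 1]

noncomputable def matL : Matrix (Fin 4) (Fin 6) ℝ :=
  !![1, 0, 0, 0, 0, 0;
     0, 1, 0, 0, 0, 0;
     0, 0, 1, 0, 0, 0;
     0, 0, 0, 1, 0, 0]

noncomputable def matR : Matrix (Fin 6) (Fin 4) ℝ :=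
  !![-8/3, -106/21, 20/21, 52/21;
  8/3, -16/21, 4/7, -64/21;
  0, 55/42, -11/21, 11/7;
  0, 2, 0, 0;
  0, 0, 0, 0;
  0, 0, 0, 0]

lemma MR_eq : realM * matR = matB := by
  ext i j
  fin_cases i <;> fin_cases j <;>
    norm_num [realM, matR, matB, Matrix.mul_apply, Fin.sum_univ_succ]

lemma LB_eq : matL * matB = 1 := by
  ext i j
  fin_cases i <;> fin_cases j <;>
    norm_num [matL, matB, Matrix.mul_apply, Fin.sum_univ_succ]

lemma BLM_eq : matB * (matL * realM) = realM := by
  ext i j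
  fin_cases i <;> fin_cases j <;>
    norm_num [matL, matB, realM, Matrix.mul_apply, Fin.sum_univ_succ]

lemma rank_realM : realM.rank = 4 := by
  apply le_antisymm
  · rw [← BLM_eq]
    exact (Matrix.rank_mul_le_left _ _).trans (by simpa using Matrix.rank_le_width matB)
  · have h1 : (matL * (realM * matR)).rank = 4 := by
      rw [MR_eq, LB_eq, Matrix.rank_one]; simp
    rw [← h1]
    exact (Matrix.rank_mul_le_right _ _).trans (Matrix.rank_mul_le_left _ _)

noncomputable def matW (s : ℝ) : Matrix (Fin 6) (Fin 5) ℝ :=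
  !![0, 3/14 + 1/14*s, 11/14 + 1/14*s, 0, 0;
  0, 0, 0, 12/17 - 2/17*s, 5/7 + 1/14*s;
  2 - 1*s, 1, 3/7 - 1/7*s, 26/17 + 7/17*s, 0;
  -1 + 1*s, 0, 4/7 + 1/7*s, 21/17 - 12/17*s, 39/14 + 5/28*s;
  0 + 1/2*s, 2/7 - 1/14*s, 0, 7/17 - 4/17*s, 33/28 + 1/56*s;
  1/2 + 1/4*s, 15/28 - 1/14*s, 3/28 - 1/28*s, 0, 3/8 - 1/16*s]

noncomputable def matH (s : ℝ) : Matrix (Fin 5) (Fin 6) ℝ :=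
  !![1/4 + 1/4*s, 0, 0 + 1/11*s, 1/4 - 1/8*s, 0, 1/6 + 1/12*s;
  3/4 - 1/4*s, 1/2 + 1/8*s, 0, 0, 0, 0;
  0, 1/2 - 1/8*s, 1 - 1/11*s, 0, 0, 0;
  0, 0, 0, 3/4 + 1/8*s, 13/34 - 7/68*s, 0;
  0, 0, 0, 0, 21/34 + 7/68*s, 5/6 - 1/12*s]

lemma matW_nonneg (s : ℝ) (h1 : 1 ≤ s) (h2 : s ≤ 3/2) (i k) : 0 ≤ matW s i k := by
  fin_cases i <;> fin_cases k <;> simp [matW] <;> linarith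

lemma matH_nonneg (s : ℝ) (h1 : 1 ≤ s) (h2 : s ≤ 3/2) (i k) : 0 ≤ matH s i k := by
  fin_cases i <;> fin_cases k <;> simp [matH] <;> linarith

lemma WH_eq (s : ℝ) (hs : s ^ 2 = 2) : realM = matW s * matH s := by
  ext i j
  fin_cases i <;> fin_cases j <;>
    simp [realM, matW, matH, Matrix.mul_apply, Fin.sum_univ_succ] <;>
    first
      | (ring_nf; done)
      | (ring_nf; rw [hs]; ring_nf; done)

lemma BLW_eq (s : ℝ) : matB * (matL * matW s) = matW s := by
  ext i j
  fin_cases i <;> fin_cases j <;>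
    simp [matL, matB, matW, Matrix.mul_apply, Fin.sum_univ_succ] <;> ring

lemma upper : ∃ W : Matrix (Fin 6) (Fin 5) ℝ, ∃ H : Matrix (Fin 5) (Fin 6) ℝ,
    (∀ i k, 0 ≤ W i k) ∧ (∀ k j, 0 ≤ H k j) ∧ realM = W * H ∧ W.rank = realM.rank := by
  have hs : (√2 : ℝ) ^ 2 = 2 := Real.sq_sqrt (by norm_num)
  have h0 : (0 : ℝ) ≤ √2 := Real.sqrt_nonneg 2
  have h1 : (1 : ℝ) ≤ √2 := by nlinarith
  have h2 : (√2 : ℝ) ≤ 3/2 := by nlinarith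
  refine ⟨matW √2, matH √2, matW_nonneg _ h1 h2, matH_nonneg _ h1 h2, WH_eq _ hs, ?_⟩
  apply le_antisymm
  · rw [rank_realM, ← BLW_eq]
    exact (Matrix.rank_mul_le_left _ _).trans (by simpa using Matrix.rank_le_width matB)
  · conv_lhs => rw [WH_eq _ hs]
    exact Matrix.rank_mul_le_left _ _

lemma two_rank (w v : Fin 3 → ℝ) (x y : Fin 3 → ℝ)
    (h : ∀ i j : Fin 3, realM (![1, 2, 3] i) (![3, 4, 5] j) = w i * x j + v i * y j) : False := by
  have h00 := h 0 0
  have h01 := h 0 1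
  have h02 := h 0 2
  have h10 := h 1 0
  have h11 := h 1 1
  have h12 := h 1 2
  have h20 := h 2 0
  have h21 := h 2 1
  have h22 := h 2 2
  have hd : realM 1 3 * (realM 2 4 * realM 3 5 - realM 2 5 * realM 3 4)
     - realM 1 4 * (realM 2 3 * realM 3 5 - realM 2 5 * realM 3 3)
     + realM 1 5 * (realM 2 3 * realM 3 4 - realM 2 4 * realM 3 3) = 0 := by
    simp only [Matrix.cons_val] at h00 h01 h02 h10 h11 h12 h20 h21 h22
    rw [h00, h01, h02, h10, h11, h12, h20, h21, h22]
    ring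
  simp [realM] at hd
  norm_num at hd

lemma lower4 (W : Matrix (Fin 6) (Fin 4) ℝ) (H : Matrix (Fin 4) (Fin 6) ℝ)
    (hW : ∀ i k, 0 ≤ W i k) (hH : ∀ k j, 0 ≤ H k j) (hM : realM = W * H) : False := by
  have hent : ∀ i j, realM i j = ∑ k, W i k * H k j := by
    intro i j; rw [hM, Matrix.mul_apply]
  have hzero : ∀ i j k, realM i j = 0 → W i k * H k j = 0 := by
    intro i j k h0
    rw [hent] at h0
    exact (Finset.sum_eq_zero_iff_of_nonneg
      (fun k _ => mul_nonneg (hW i k) (hH k j))).1 h0 k (Finset.mem_univ k)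
  have hle : ∀ i j k, W i k * H k j ≤ realM i j := by
    intro i j k
    rw [hent]
    exact Finset.single_le_sum (f := fun k => W i k * H k j)
      (fun k _ => mul_nonneg (hW i k) (hH k j)) (Finset.mem_univ k)
  have hcol : W = matB * (matL * W) := by
    have h1 : (matL * W) * (H * matR) = 1 := by
      rw [← LB_eq, ← MR_eq, hM]; simp only [Matrix.mul_assoc]
    have h2 := mul_eq_one_comm.1 h1
    calc W = W * ((H * matR) * (matL * W)) := by rw [h2, Matrix.mul_one]
      _ = matB * (matL * W) := by rw [← MR_eq, hM]; simp only [Matrix.mul_assoc]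
  have hrel : ∀ k, W 4 k = - W 0 k - 9/4 * W 1 k + 1/2 * W 2 k + W 3 k := by
    intro k
    have := congrFun (congrFun hcol 4) k
    rw [this]
    simp only [Matrix.mul_apply, Fin.sum_univ_four, Fin.sum_univ_six]
    simp [matB, matL]
    ring
  have hz : ∀ k, W 0 k ≠ 0 → ∀ j : Fin 3, H k (![3, 4, 5] j) = 0 := by
    intro k hk j
    have := hzero 0 (![3, 4, 5] j) k (by fin_cases j <;> simp [realM])
    exact (mul_eq_zero.1 this).resolve_left hk
  have huniq : ∀ b k, W 0 b ≠ 0 → W 0 k ≠ 0 → b = k := by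
    intro b k hb hk
    by_contra hne
    have hb' := hz b hb
    have hk' := hz k hk
    have key : ∀ p q : Fin 4, (∀ f : Fin 4 → ℝ, f b = 0 → f k = 0 → ∑ l, f l = f p + f q) →
        False := by
      intro p q hf
      refine two_rank (fun i => W (![1, 2, 3] i) p) (fun i => W (![1, 2, 3] i) q)
        (fun j => H p (![3, 4, 5] j)) (fun j => H q (![3, 4, 5] j)) ?_
      intro i j
      rw [hent]
      exact hf (fun l => W (![1, 2, 3] i) l * H l (![3, 4, 5] j)) (by simp only [hb', mul_zero])
        (by simp only [hk', mul_zero])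
    have hex : ∃ p q : Fin 4, p ≠ q ∧ ({b, k, p, q} : Finset (Fin 4)) = Finset.univ ∧
        b ≠ p ∧ b ≠ q ∧ k ≠ p ∧ k ≠ q := by
      clear key hb' hk' hb hk
      revert b k
      decide
    obtain ⟨p, q, hpq, hu, h1, h2, h3, h4⟩ := hex
    refine key p q ?_
    intro f hfb hfk
    rw [← hu, Finset.sum_insert (by simp [hne, h1, h2]), Finset.sum_insert (by simp [h3, h4]),
      Finset.sum_pair hpq, hfb, hfk]
    ring
  have hexb : ∃ b, W 0 b * H b 0 ≠ 0 := by
    by_contra! hcon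
    have := hent 0 0
    simp only [hcon, Finset.sum_const_zero] at this
    norm_num [realM] at this
  obtain ⟨b, hb⟩ := hexb
  have hWb : W 0 b ≠ 0 := left_ne_zero_of_mul hb
  have hHb : H b 0 ≠ 0 := right_ne_zero_of_mul hb
  have h1b : W 1 b = 0 :=
    (mul_eq_zero.1 (hzero 1 0 b (by simp [realM]))).resolve_right hHb
  have hrow : ∀ j, realM 0 j = W 0 b * H b j := by
    intro j
    rw [hent]
    refine Finset.sum_eq_single b ?_ (by simp)
    intro k _ hk
    have : W 0 k = 0 := by
      by_contra h
      exact hk (huniq k b h hWb)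
    rw [this, zero_mul]
  have e1 : (1/2 : ℝ) = W 0 b * H b 1 := by rw [← hrow 1]; simp [realM]
  have e2 : (17/22 : ℝ) = W 0 b * H b 2 := by rw [← hrow 2]; simp [realM]
  have f1 : W 3 b * H b 1 ≤ 1/4 := by
    refine (hle 3 1 b).trans (le_of_eq ?_); simp [realM]
  have f2 : W 2 b * H b 2 ≤ 3/11 := by
    refine (hle 2 2 b).trans (le_of_eq ?_); simp [realM]
  have hpos : 0 < W 0 b := lt_of_le_of_ne (hW 0 b) (Ne.symm hWb)
  have g1 : W 3 b * (1/2) ≤ W 0 b * (1/4) := by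
    have := mul_le_mul_of_nonneg_left f1 hpos.le
    rw [e1]; linarith
  have g2 : W 2 b * (17/22) ≤ W 0 b * (3/11) := by
    have := mul_le_mul_of_nonneg_left f2 hpos.le
    rw [e2]; linarith
  have := hrel b
  have h4 := hW 4 b
  rw [h1b] at this
  linarith

lemma lower (d : ℕ) (W : Matrix (Fin 6) (Fin d) ℝ) (H : Matrix (Fin d) (Fin 6) ℝ)
    (hW : ∀ i k, 0 ≤ W i k) (hH : ∀ k j, 0 ≤ H k j) (hM : realM = W * H) : 5 ≤ d := by
  have h4 : 4 ≤ d := by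
    rw [← rank_realM, hM]
    exact (Matrix.rank_mul_le_left _ _).trans (by simpa using Matrix.rank_le_width W)
  rcases Nat.lt_or_ge 4 d with h | h
  · exact h
  · obtain rfl : d = 4 := le_antisymm h h4
    exact (lower4 W H hW hH hM).elim

/-- For the matrix `M` above: `rank M = 4`, `rrk+(M) = 5`, and `rk+(M) = 5`. -/
theorem stmt15 :
    (paperMatrix.map ((↑) : ℚ → ℝ)).rank = 4 ∧
    rrkPos (paperMatrix.map ((↑) : ℚ → ℝ)) = 5 ∧
    rkPos (paperMatrix.map ((↑) : ℚ → ℝ)) = 5 := by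
  rw [map_eq_realM]
  obtain ⟨W, H, hW, hH, hM, hr⟩ := upper
  refine ⟨rank_realM, ?_, ?_⟩
  · apply le_antisymm
    · exact Nat.sInf_le ⟨W, H, hW, hH, hM, hr⟩
    · refine le_csInf ⟨5, W, H, hW, hH, hM, hr⟩ ?_
      rintro d ⟨W', H', hW', hH', hM', _⟩
      exact lower d W' H' hW' hH' hM'
  · apply le_antisymm
    · exact Nat.sInf_le ⟨W, H, hW, hH, hM⟩
    · refine le_csInf ⟨5, W, H, hW, hH, hM⟩ ?_
      rintro d ⟨W', H', hW', hH', hM'⟩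
      exact lower d W' H' hW' hH' hM'
end
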